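/- arXiv:1509.07984 — 13 statements merged into one kernel-verified Lean document; each statement's English description precedes it below -/
import Mathlib

section
/- The graph subspace G(H₀,X₀) of a bounded linear operator X₀ : H₀ → H₁ is invariant for the block operator matrix A + V if and only if X₀ satisfies the Riccati equation A₁X₀f − X₀A₀f − X₀W₁X₀f + W₀f = 0 for every f ∈ 𝔇₀ such that X₀f ∈ 𝔇₁. -/
/-!
A vector `f ⊕ g` lies in the graph of `X₀` exactly when `X₀ f = g`. Hence
`B (f ⊕ X₀ f) = (A₀ f + W₁ X₀ f) ⊕ (W₀ f + A₁ X₀ f)` lies in the graph exactly when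
`X₀ (A₀ f + W₁ X₀ f) = W₀ f + A₁ X₀ f`, which is the Riccati equation at `f`. The vectors of the
graph that lie in `𝔇₀ ⊕ 𝔇₁` are those `f ⊕ X₀ f` with `f ∈ 𝔇₀` and `X₀ f ∈ 𝔇₁`.
-/

noncomputable section

open Function Set

/-- A subspace `U` of `H` is *invariant* for a linear operator `T` with domain `dom ⊆ H`
if `T x ∈ U` for every `x ∈ dom ∩ U`. -/
def InvariantFor {H : Type*} [AddCommGroup H] [Module ℂ H]
    (T : H →ₗ[ℂ] H) (dom U : Submodule ℂ H) : Prop :=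
  ∀ x ∈ dom, x ∈ U → T x ∈ U

variable {H₀ H₁ : Type*}
  [NormedAddCommGroup H₀] [InnerProductSpace ℂ H₀] [CompleteSpace H₀]
  [NormedAddCommGroup H₁] [InnerProductSpace ℂ H₁] [CompleteSpace H₁]

/-- The block operator matrix `B = A + V`, `(f ⊕ g) ↦ (A₀ f + W₁ g) ⊕ (W₀ f + A₁ g)`,
as a total linear map on `H₀ × H₁`; as an unbounded operator it is considered on its
natural domain `𝔇 = 𝔇₀ ⊕ 𝔇₁` with `𝔇₀ = Dom(A₀) ∩ Dom(W₀)`, `𝔇₁ = Dom(A₁) ∩ Dom(W₁)`. -/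
def blockOp (A₀ : H₀ →ₗ[ℂ] H₀) (A₁ : H₁ →ₗ[ℂ] H₁)
    (W₀ : H₀ →ₗ[ℂ] H₁) (W₁ : H₁ →ₗ[ℂ] H₀) : H₀ × H₁ →ₗ[ℂ] H₀ × H₁ :=
  LinearMap.prod
    (A₀ ∘ₗ LinearMap.fst ℂ H₀ H₁ + W₁ ∘ₗ LinearMap.snd ℂ H₀ H₁)
    (W₀ ∘ₗ LinearMap.fst ℂ H₀ H₁ + A₁ ∘ₗ LinearMap.snd ℂ H₀ H₁)

/-- The graph subspace `G(H₀, X₀) = { f ⊕ X₀ f : f ∈ H₀ }`. -/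
def graphSub0 (X₀ : H₀ →L[ℂ] H₁) : Submodule ℂ (H₀ × H₁) :=
  LinearMap.ker
    ((X₀ : H₀ →ₗ[ℂ] H₁) ∘ₗ LinearMap.fst ℂ H₀ H₁ - LinearMap.snd ℂ H₀ H₁)

/-- The graph subspace `G(H₁, X₁) = { X₁ g ⊕ g : g ∈ H₁ }`. -/
def graphSub1 (X₁ : H₁ →L[ℂ] H₀) : Submodule ℂ (H₀ × H₁) :=
  LinearMap.ker
    ((X₁ : H₁ →ₗ[ℂ] H₀) ∘ₗ LinearMap.snd ℂ H₀ H₁ - LinearMap.fst ℂ H₀ H₁)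

/-- The operator `Y(f ⊕ g) = X₁ g ⊕ X₀ f`. -/
def Yop (X₀ : H₀ →L[ℂ] H₁) (X₁ : H₁ →L[ℂ] H₀) : H₀ × H₁ →ₗ[ℂ] H₀ × H₁ :=
  LinearMap.prod
    ((X₁ : H₁ →ₗ[ℂ] H₀) ∘ₗ LinearMap.snd ℂ H₀ H₁)
    ((X₀ : H₀ →ₗ[ℂ] H₁) ∘ₗ LinearMap.fst ℂ H₀ H₁)

/-- The block diagonal operator `A − YV`, `(f ⊕ g) ↦ (A₀ f − X₁ W₀ f) ⊕ (A₁ g − X₀ W₁ g)`. -/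
def AminusYV (A₀ : H₀ →ₗ[ℂ] H₀) (A₁ : H₁ →ₗ[ℂ] H₁)
    (W₀ : H₀ →ₗ[ℂ] H₁) (W₁ : H₁ →ₗ[ℂ] H₀)
    (X₀ : H₀ →L[ℂ] H₁) (X₁ : H₁ →L[ℂ] H₀) : H₀ × H₁ →ₗ[ℂ] H₀ × H₁ :=
  LinearMap.prod
    ((A₀ - (X₁ : H₁ →ₗ[ℂ] H₀) ∘ₗ W₀) ∘ₗ LinearMap.fst ℂ H₀ H₁)
    ((A₁ - (X₀ : H₀ →ₗ[ℂ] H₁) ∘ₗ W₁) ∘ₗ LinearMap.snd ℂ H₀ H₁)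

/-- The block diagonal operator `A + VY`, `(f ⊕ g) ↦ (A₀ f + W₁ X₀ f) ⊕ (A₁ g + W₀ X₁ g)`. -/
def AplusVY (A₀ : H₀ →ₗ[ℂ] H₀) (A₁ : H₁ →ₗ[ℂ] H₁)
    (W₀ : H₀ →ₗ[ℂ] H₁) (W₁ : H₁ →ₗ[ℂ] H₀)
    (X₀ : H₀ →L[ℂ] H₁) (X₁ : H₁ →L[ℂ] H₀) : H₀ × H₁ →ₗ[ℂ] H₀ × H₁ :=
  LinearMap.prod
    ((A₀ + W₁ ∘ₗ (X₀ : H₀ →ₗ[ℂ] H₁)) ∘ₗ LinearMap.fst ℂ H₀ H₁)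
    ((A₁ + W₀ ∘ₗ (X₁ : H₁ →ₗ[ℂ] H₀)) ∘ₗ LinearMap.snd ℂ H₀ H₁)

/-- The graph subspace `G(H₀, X₀)` of a bounded operator `X₀ : H₀ → H₁` is
invariant for the block operator matrix `A + V` (with natural domain
`𝔇 = (Dom(A₀) ∩ Dom(W₀)) ⊕ (Dom(A₁) ∩ Dom(W₁))`) if and only if `X₀` satisfies the Riccati
equation `A₁ X₀ f − X₀ A₀ f − X₀ W₁ X₀ f + W₀ f = 0` for every `f ∈ 𝔇₀` with `X₀ f ∈ 𝔇₁`. -/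
theorem graph0_invariant_iff_riccati
    (A₀ : H₀ →ₗ[ℂ] H₀) (DA₀ : Submodule ℂ H₀) (A₁ : H₁ →ₗ[ℂ] H₁) (DA₁ : Submodule ℂ H₁)
    (W₀ : H₀ →ₗ[ℂ] H₁) (DW₀ : Submodule ℂ H₀) (W₁ : H₁ →ₗ[ℂ] H₀) (DW₁ : Submodule ℂ H₁)
    (X₀ : H₀ →L[ℂ] H₁) :
    InvariantFor (blockOp A₀ A₁ W₀ W₁) ((DA₀ ⊓ DW₀).prod (DA₁ ⊓ DW₁)) (graphSub0 X₀) ↔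
      ∀ f ∈ DA₀ ⊓ DW₀, X₀ f ∈ DA₁ ⊓ DW₁ →
        A₁ (X₀ f) - X₀ (A₀ f) - X₀ (W₁ (X₀ f)) + W₀ f = 0 := by
  have mem_graph : ∀ x : H₀ × H₁, x ∈ graphSub0 X₀ ↔ X₀ x.1 = x.2 := fun x => by
    simp [graphSub0, sub_eq_zero]
  -- The Riccati expression at `f` is the defect by which `B (f ⊕ X₀ f)` fails to lie in the graph.
  have key : ∀ f : H₀, blockOp A₀ A₁ W₀ W₁ (f, X₀ f) ∈ graphSub0 X₀ ↔
      A₁ (X₀ f) - X₀ (A₀ f) - X₀ (W₁ (X₀ f)) + W₀ f = 0 := fun f => by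
    rw [mem_graph, eq_comm, ← sub_eq_zero]
    change W₀ f + A₁ (X₀ f) - X₀ (A₀ f + W₁ (X₀ f)) = 0 ↔ _
    rw [map_add]
    refine Eq.congr_left ?_
    abel
  constructor
  · intro h f hf hXf
    exact (key f).1 (h (f, X₀ f) ⟨hf, hXf⟩ ((mem_graph _).2 rfl))
  · rintro h ⟨f, g⟩ ⟨hf, hg⟩ hfg
    obtain rfl : X₀ f = g := (mem_graph _).1 hfg
    exact (key f).2 (h f hf hg)
end
end

section
/- The graph subspace G(H₁,X₁) of a bounded linear operator X₁ : H₁ → H₀ is invariant for the block operator matrix A + V if and only if X₁ satisfies the Riccati equation A₀X₁g − X₁A₁g − X₁W₀X₁g + W₁g = 0 for every g ∈ 𝔇₁ such that X₁g ∈ 𝔇₀. -/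
/-! Every vector of the graph subspace is `X₁ g ⊕ g`. The operator matrix maps it to
`(A₀ X₁ g + W₁ g) ⊕ (W₀ X₁ g + A₁ g)`, which lies in the graph subspace exactly when its first
component is `X₁` of its second, i.e. when the Riccati equation holds at `g`. -/

noncomputable section

open Function Set

variable {H₀ H₁ : Type*}
  [NormedAddCommGroup H₀] [InnerProductSpace ℂ H₀] [CompleteSpace H₀]
  [NormedAddCommGroup H₁] [InnerProductSpace ℂ H₁] [CompleteSpace H₁]

/-- The subspace `graphSub1 X₁`, defined as a kernel, is the graph `f = X₁ g`. -/
lemma mem_graphSub1 (X₁ : H₁ →L[ℂ] H₀) (x : H₀ × H₁) :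
    x ∈ graphSub1 X₁ ↔ X₁ x.2 = x.1 := by
  simp [graphSub1, sub_eq_zero]

/-- The graph subspace `G(H₁, X₁)` of a bounded operator `X₁ : H₁ → H₀` is
invariant for the block operator matrix `A + V` (with natural domain
`𝔇 = (Dom(A₀) ∩ Dom(W₀)) ⊕ (Dom(A₁) ∩ Dom(W₁))`) if and only if `X₁` satisfies the Riccati
equation `A₀ X₁ g − X₁ A₁ g − X₁ W₀ X₁ g + W₁ g = 0` for every `g ∈ 𝔇₁` with `X₁ g ∈ 𝔇₀`. -/
theorem graph1_invariant_iff_riccati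
    (A₀ : H₀ →ₗ[ℂ] H₀) (DA₀ : Submodule ℂ H₀) (A₁ : H₁ →ₗ[ℂ] H₁) (DA₁ : Submodule ℂ H₁)
    (W₀ : H₀ →ₗ[ℂ] H₁) (DW₀ : Submodule ℂ H₀) (W₁ : H₁ →ₗ[ℂ] H₀) (DW₁ : Submodule ℂ H₁)
    (X₁ : H₁ →L[ℂ] H₀) :
    InvariantFor (blockOp A₀ A₁ W₀ W₁) ((DA₀ ⊓ DW₀).prod (DA₁ ⊓ DW₁)) (graphSub1 X₁) ↔
      ∀ g ∈ DA₁ ⊓ DW₁, X₁ g ∈ DA₀ ⊓ DW₀ →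
        A₀ (X₁ g) - X₁ (A₁ g) - X₁ (W₀ (X₁ g)) + W₁ g = 0 := by
  have key (g : H₁) : blockOp A₀ A₁ W₀ W₁ (X₁ g, g) ∈ graphSub1 X₁ ↔
      A₀ (X₁ g) - X₁ (A₁ g) - X₁ (W₀ (X₁ g)) + W₁ g = 0 := by
    have hE : A₀ (X₁ g) - X₁ (A₁ g) - X₁ (W₀ (X₁ g)) + W₁ g =
        (A₀ (X₁ g) + W₁ g) - (X₁ (W₀ (X₁ g)) + X₁ (A₁ g)) := by abel
    rw [mem_graphSub1, hE, sub_eq_zero, eq_comm]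
    simp [blockOp]
  constructor
  · intro h g hg hXg
    exact (key g).1 (h (X₁ g, g) ⟨hXg, hg⟩ ((mem_graphSub1 X₁ _).2 rfl))
  · rintro h ⟨f, g⟩ ⟨hf, hg⟩ hx
    obtain rfl : X₁ g = f := (mem_graphSub1 X₁ _).1 hx
    exact (key g).2 (h g hg hf)
end
end

section
/- Let X₀ : H₀ → H₁ and X₁ : H₁ → H₀ be bounded linear operators whose graph subspaces G(H₀,X₀) and G(H₁,X₁) are complementary subspaces of H (G(H₀,X₀) + G(H₁,X₁) = H and G(H₀,X₀) ∩ G(H₁,X₁) = {0}). Then the bounded operators I_H + Y and I_H − Y are automorphisms of H, i.e. they are bijective (and hence have bounded inverses). -/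
/-!
`I + Y` sends `f ⊕ g` to `(f ⊕ X₀ f) + (X₁ g ⊕ g)`, so it is the sum map from
`G(H₀, X₀) × G(H₁, X₁)` to `H` in graph coordinates: it is onto because the graphs span `H`
and injective because they meet only in `0`. With the involution `J (f ⊕ g) = f ⊕ -g` one has
`J Y J = -Y`, hence `I - Y = J (I + Y) J` is bijective as well.
-/


noncomputable section

open Function Set

variable {H₀ H₁ : Type*}
  [NormedAddCommGroup H₀] [InnerProductSpace ℂ H₀] [CompleteSpace H₀]
  [NormedAddCommGroup H₁] [InnerProductSpace ℂ H₁] [CompleteSpace H₁]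

/-- If the graph subspaces `G(H₀, X₀)` and `G(H₁, X₁)` of bounded operators
`X₀ : H₀ → H₁` and `X₁ : H₁ → H₀` are complementary subspaces of `H = H₀ ⊕ H₁`, then the
bounded operators `I_H + Y` and `I_H − Y` are automorphisms of `H`, i.e. bijective. -/
theorem complementary_graphs_automorphism
    (X₀ : H₀ →L[ℂ] H₁) (X₁ : H₁ →L[ℂ] H₀)
    (hsum : graphSub0 X₀ ⊔ graphSub1 X₁ = ⊤)
    (hdisj : graphSub0 X₀ ⊓ graphSub1 X₁ = ⊥) :
    (Function.Bijective fun x : H₀ × H₁ => x + Yop X₀ X₁ x) ∧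
      (Function.Bijective fun x : H₀ × H₁ => x - Yop X₀ X₁ x) := by
  have hinj : Function.Injective fun x : H₀ × H₁ => x + Yop X₀ X₁ x := by
    have : Function.Injective ((LinearMap.id : H₀ × H₁ →ₗ[ℂ] H₀ × H₁) + Yop X₀ X₁) := by
      rw [injective_iff_map_eq_zero]
      rintro ⟨f, g⟩ h
      obtain ⟨h1, h2⟩ : f + X₁ g = 0 ∧ g + X₀ f = 0 := by
        simpa [Yop, Prod.ext_iff] using h
      -- `f ⊕ X₀ f = -(X₁ g ⊕ g)` lies in both graphs.
      have hm : ((f, -g) : H₀ × H₁) ∈ graphSub0 X₀ ⊓ graphSub1 X₁ := by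
        refine ⟨?_, ?_⟩
        · simpa [graphSub0, add_comm] using h2
        · have h3 : X₁ g = -f := eq_neg_of_add_eq_zero_right h1
          simp [graphSub1, h3]
      rw [hdisj] at hm
      simpa [Prod.ext_iff] using hm
    exact this
  have hsurj : Function.Surjective fun x : H₀ × H₁ => x + Yop X₀ X₁ x := by
    intro y
    have hy : y ∈ graphSub0 X₀ ⊔ graphSub1 X₁ := by rw [hsum]; trivial
    obtain ⟨⟨a, b⟩, hu, ⟨c, d⟩, hv, rfl⟩ := Submodule.mem_sup.1 hy
    have hu' : X₀ a = b := by simpa [graphSub0, sub_eq_zero] using hu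
    have hv' : X₁ d = c := by simpa [graphSub1, sub_eq_zero] using hv
    refine ⟨(a, d), ?_⟩
    simp [Yop, hu', hv', add_comm]
  have hJ : Function.Involutive fun x : H₀ × H₁ => (x.1, -x.2) := fun x => by simp
  refine ⟨⟨hinj, hsurj⟩, ?_⟩
  convert hJ.bijective.comp (Function.Bijective.comp ⟨hinj, hsurj⟩ hJ.bijective) using 1
  funext x
  simp [Yop, Prod.ext_iff, sub_eq_add_neg, add_comm]
end
end

section
/- Let X₀ : H₀ → H₁ and X₁ : H₁ → H₀ be bounded linear operators. If the bounded operator I_H + Y is bijective, then the graph subspaces G(H₀,X₀) and G(H₁,X₁) are complementary subspaces of H, i.e. G(H₀,X₀) + G(H₁,X₁) = H and G(H₀,X₀) ∩ G(H₁,X₁) = {0}. -/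
noncomputable section

open Function Set

variable {H₀ H₁ : Type*}
  [NormedAddCommGroup H₀] [InnerProductSpace ℂ H₀] [CompleteSpace H₀]
  [NormedAddCommGroup H₁] [InnerProductSpace ℂ H₁] [CompleteSpace H₁]

/-- If the bounded operator `I_H + Y` is bijective, then the graph subspaces
`G(H₀, X₀)` and `G(H₁, X₁)` are complementary subspaces of `H = H₀ ⊕ H₁`. -/
theorem complementary_graphs_of_automorphism
    (X₀ : H₀ →L[ℂ] H₁) (X₁ : H₁ →L[ℂ] H₀)
    (hbij : Function.Bijective fun x : H₀ × H₁ => x + Yop X₀ X₁ x) :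
    graphSub0 X₀ ⊔ graphSub1 X₁ = ⊤ ∧ graphSub0 X₀ ⊓ graphSub1 X₁ = ⊥ := by
  obtain ⟨hinj, hsurj⟩ := hbij
  constructor
  · rw [eq_top_iff]
    -- If `(f, g) + Y (f, g) = x`, then `x = (f, X₀ f) + (X₁ g, g)`.
    intro x _
    obtain ⟨⟨f, g⟩, rfl⟩ := hsurj x
    refine Submodule.mem_sup.2 ⟨(f, X₀ f), by simp [graphSub0], (X₁ g, g), by simp [graphSub1], ?_⟩
    simp [Yop, add_comm]
  · rw [eq_bot_iff]
    -- If `(f, g)` lies in both graphs, then `I + Y` annihilates `(f, -g)`.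
    rintro ⟨f, g⟩ ⟨h0, h1⟩
    have h0 : X₀ f = g := by simpa [graphSub0, sub_eq_zero] using h0
    have h1 : X₁ g = f := by simpa [graphSub1, sub_eq_zero] using h1
    have h : ((f, -g) : H₀ × H₁) = 0 := hinj (by simp [Yop, h0, h1])
    simpa using h
end
end

section
/- Let G(H₀,X₀) and G(H₁,X₁) be complementary graph subspaces of bounded linear operators X₀ : H₀ → H₁ and X₁ : H₁ → H₀, and suppose both are invariant for the block operator matrix A + V. Then the domain 𝔇 is invariant for X₀ and X₁ (i.e. X₀ maps 𝔇₀ into 𝔇₁ and X₁ maps 𝔇₁ into 𝔇₀) if and only if (I_H − Y)(A + V) ⊆ (A − YV)(I_H − Y) as an extension relation, i.e. every x ∈ 𝔇 satisfies (I_H − Y)x ∈ 𝔇 and (I_H − Y)(A + V)x = (A − YV)(I_H − Y)x. -/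
/-!
Once `X₀` and `X₁` preserve the domain, invariance of the two graphs says precisely that the Riccati
equations `X₀ (A₀ f + W₁ X₀ f) = W₀ f + A₁ X₀ f` and `X₁ (W₀ X₁ g + A₁ g) = A₀ X₁ g + W₁ g` hold
on `𝔇₀` and `𝔇₁`. Written out in components, `(I - Y)(A + V) = (A - YV)(I - Y)` on `f ⊕ g` is
exactly this pair: the `H₀` component is the second equation at `g`, the `H₁` component the first
at `f`. Conversely, the domain inclusion contained in the extension relation, applied to `f ⊕ 0`
and `0 ⊕ g`, already gives the invariance of the domain.
-/

noncomputable section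

open Function Set

variable {H₀ H₁ : Type*}
  [NormedAddCommGroup H₀] [InnerProductSpace ℂ H₀] [CompleteSpace H₀]
  [NormedAddCommGroup H₁] [InnerProductSpace ℂ H₁] [CompleteSpace H₁]

/-- Proposition, part (b). Let `G(H₀, X₀)` and `G(H₁, X₁)` be complementary
graph subspaces, both invariant for the block operator matrix `A + V` with natural domain `𝔇`.
Then `𝔇` is invariant for `X₀` and `X₁` (i.e. `X₀` maps `𝔇₀` into `𝔇₁` and `X₁` maps `𝔇₁`
into `𝔇₀`) if and only if `(I_H − Y)(A + V) ⊆ (A − YV)(I_H − Y)`, i.e. every `x ∈ 𝔇`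
satisfies `(I_H − Y)x ∈ 𝔇` and `(I_H − Y)(A + V)x = (A − YV)(I_H − Y)x`. -/
theorem domain_invariant_iff_extension_relation
    (A₀ : H₀ →ₗ[ℂ] H₀) (DA₀ : Submodule ℂ H₀) (A₁ : H₁ →ₗ[ℂ] H₁) (DA₁ : Submodule ℂ H₁)
    (W₀ : H₀ →ₗ[ℂ] H₁) (DW₀ : Submodule ℂ H₀) (W₁ : H₁ →ₗ[ℂ] H₀) (DW₁ : Submodule ℂ H₁)
    (X₀ : H₀ →L[ℂ] H₁) (X₁ : H₁ →L[ℂ] H₀)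
    (hsum : graphSub0 X₀ ⊔ graphSub1 X₁ = ⊤)
    (hdisj : graphSub0 X₀ ⊓ graphSub1 X₁ = ⊥)
    (hinv0 : InvariantFor (blockOp A₀ A₁ W₀ W₁) ((DA₀ ⊓ DW₀).prod (DA₁ ⊓ DW₁)) (graphSub0 X₀))
    (hinv1 : InvariantFor (blockOp A₀ A₁ W₀ W₁) ((DA₀ ⊓ DW₀).prod (DA₁ ⊓ DW₁)) (graphSub1 X₁)) :
    ((∀ f ∈ DA₀ ⊓ DW₀, X₀ f ∈ DA₁ ⊓ DW₁) ∧ (∀ g ∈ DA₁ ⊓ DW₁, X₁ g ∈ DA₀ ⊓ DW₀)) ↔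
      ∀ x ∈ (DA₀ ⊓ DW₀).prod (DA₁ ⊓ DW₁),
        x - Yop X₀ X₁ x ∈ (DA₀ ⊓ DW₀).prod (DA₁ ⊓ DW₁) ∧
          blockOp A₀ A₁ W₀ W₁ x - Yop X₀ X₁ (blockOp A₀ A₁ W₀ W₁ x) =
            AminusYV A₀ A₁ W₀ W₁ X₀ X₁ (x - Yop X₀ X₁ x) := by
  constructor
  · rintro ⟨h0, h1⟩ ⟨f, g⟩ hx
    obtain ⟨hf, hg⟩ := Submodule.mem_prod.1 hx
    refine ⟨Submodule.mem_prod.2 ⟨sub_mem hf (h1 g hg), sub_mem hg (h0 f hf)⟩, ?_⟩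
    -- The Riccati equations on `𝔇₀` and `𝔇₁`: invariance tested on `f ⊕ X₀ f` and `X₁ g ⊕ g`.
    have e0 : X₀ (A₀ f + W₁ (X₀ f)) = W₀ f + A₁ (X₀ f) :=
      sub_eq_zero.1 (hinv0 (f, X₀ f) (Submodule.mem_prod.2 ⟨hf, h0 f hf⟩) (by simp [graphSub0]))
    have e1 : X₁ (W₀ (X₁ g) + A₁ g) = A₀ (X₁ g) + W₁ g :=
      sub_eq_zero.1 (hinv1 (X₁ g, g) (Submodule.mem_prod.2 ⟨h1 g hg, hg⟩) (by simp [graphSub1]))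
    rw [map_add] at e0 e1
    refine Prod.ext ?_ ?_
    · change A₀ f + W₁ g - X₁ (W₀ f + A₁ g) = A₀ (f - X₁ g) - X₁ (W₀ (f - X₁ g))
      simp only [map_add, map_sub]
      linear_combination (norm := module) -e1
    · change W₀ f + A₁ g - X₀ (A₀ f + W₁ g) = A₁ (g - X₀ f) - X₀ (W₁ (g - X₀ f))
      simp only [map_add, map_sub]
      linear_combination (norm := module) -e0
  · -- For `f ∈ 𝔇₀`, `(I - Y)(f ⊕ 0) = f ⊕ (-X₀ f)`; symmetrically for `0 ⊕ g`.
    intro h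
    refine ⟨fun f hf => ?_, fun g hg => ?_⟩
    · have := (Submodule.mem_prod.1 (h (f, 0) (Submodule.mem_prod.2 ⟨hf, zero_mem _⟩)).1).2
      simpa [Yop] using this
    · have := (Submodule.mem_prod.1 (h (0, g) (Submodule.mem_prod.2 ⟨zero_mem _, hg⟩)).1).1
      simpa [Yop] using this
end
end

section
/- Let G(H₀,X₀) and G(H₁,X₁) be complementary graph subspaces of bounded linear operators X₀ : H₀ → H₁ and X₁ : H₁ → H₀, and suppose both are invariant for the block operator matrix A + V. If the domain splits, 𝔇 = (𝔇 ∩ G(H₀,X₀)) + (𝔇 ∩ G(H₁,X₁)), and 𝔇 is invariant for X₀ and X₁ (X₀ maps 𝔇₀ into 𝔇₁ and X₁ maps 𝔇₁ into 𝔇₀), then the operator equality (I_H − Y)(A + V) = (A − YV)(I_H − Y) holds: the restriction of I_H − Y to 𝔇 is a bijection of 𝔇 onto itself, and (I_H − Y)((A + V)x) = (A − YV)((I_H − Y)x) for every x ∈ 𝔇; consequently (I_H − Y)(A + V)(I_H − Y)⁻¹ equals the block diagonal operator A − YV with diagonal entries A₀ − X₁W₀ and A₁ − X₀W₁. -/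
/-!
Invariance of the two graphs, tested on the vectors `f ⊕ X₀ f` and `X₁ g ⊕ g` of the domain, gives
the Riccati equations `X₀ (A₀ f + W₁ X₀ f) = W₀ f + A₁ X₀ f` and
`X₁ (W₀ X₁ g + A₁ g) = A₀ X₁ g + W₁ g`. Written out in components, the intertwining relation
`(I - Y)(A + V) = (A - YV)(I - Y)` at `f ⊕ g` is precisely this pair of equations.

The kernel of `I - Y` is the intersection of the two graphs, which is trivial. The splitting of the
domain says that `I + Y` maps `𝔇` onto `𝔇`, and `I - Y` is conjugate to `I + Y` by the involution
`f ⊕ g ↦ f ⊕ -g`, which preserves `𝔇`.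
-/

noncomputable section

open Function Set

variable {H₀ H₁ : Type*}
  [NormedAddCommGroup H₀] [InnerProductSpace ℂ H₀] [CompleteSpace H₀]
  [NormedAddCommGroup H₁] [InnerProductSpace ℂ H₁] [CompleteSpace H₁]

/-- block diagonalization `(I−Y)(A+V)(I−Y)⁻¹ = A − YV`. Let `G(H₀, X₀)`
and `G(H₁, X₁)` be complementary graph subspaces, both invariant for `A + V` with natural
domain `𝔇`.  If `𝔇` splits as `𝔇 = (𝔇 ∩ G(H₀,X₀)) + (𝔇 ∩ G(H₁,X₁))` and `𝔇` is invariant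
for `X₀` and `X₁`, then the operator equality `(I_H − Y)(A + V) = (A − YV)(I_H − Y)` holds:
`I_H − Y` maps `𝔇` bijectively onto itself and
`(I_H − Y)((A + V)x) = (A − YV)((I_H − Y)x)` for every `x ∈ 𝔇`; consequently, conjugation of
`A + V` by `I_H − Y` yields the block diagonal operator `A − YV` with diagonal entries
`A₀ − X₁ W₀` and `A₁ − X₀ W₁`. -/
theorem block_diagonalization_AminusYV
    (A₀ : H₀ →ₗ[ℂ] H₀) (DA₀ : Submodule ℂ H₀) (A₁ : H₁ →ₗ[ℂ] H₁) (DA₁ : Submodule ℂ H₁)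
    (W₀ : H₀ →ₗ[ℂ] H₁) (DW₀ : Submodule ℂ H₀) (W₁ : H₁ →ₗ[ℂ] H₀) (DW₁ : Submodule ℂ H₁)
    (X₀ : H₀ →L[ℂ] H₁) (X₁ : H₁ →L[ℂ] H₀)
    (hsum : graphSub0 X₀ ⊔ graphSub1 X₁ = ⊤)
    (hdisj : graphSub0 X₀ ⊓ graphSub1 X₁ = ⊥)
    (hinv0 : InvariantFor (blockOp A₀ A₁ W₀ W₁) ((DA₀ ⊓ DW₀).prod (DA₁ ⊓ DW₁)) (graphSub0 X₀))
    (hinv1 : InvariantFor (blockOp A₀ A₁ W₀ W₁) ((DA₀ ⊓ DW₀).prod (DA₁ ⊓ DW₁)) (graphSub1 X₁))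
    (hsplit : (DA₀ ⊓ DW₀).prod (DA₁ ⊓ DW₁) =
        (DA₀ ⊓ DW₀).prod (DA₁ ⊓ DW₁) ⊓ graphSub0 X₀ ⊔
          (DA₀ ⊓ DW₀).prod (DA₁ ⊓ DW₁) ⊓ graphSub1 X₁)
    (hX₀ : ∀ f ∈ DA₀ ⊓ DW₀, X₀ f ∈ DA₁ ⊓ DW₁)
    (hX₁ : ∀ g ∈ DA₁ ⊓ DW₁, X₁ g ∈ DA₀ ⊓ DW₀) :
    Set.BijOn (fun x : H₀ × H₁ => x - Yop X₀ X₁ x)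
        ((DA₀ ⊓ DW₀).prod (DA₁ ⊓ DW₁) : Set (H₀ × H₁))
        ((DA₀ ⊓ DW₀).prod (DA₁ ⊓ DW₁) : Set (H₀ × H₁)) ∧
      ∀ x ∈ (DA₀ ⊓ DW₀).prod (DA₁ ⊓ DW₁),
        blockOp A₀ A₁ W₀ W₁ x - Yop X₀ X₁ (blockOp A₀ A₁ W₀ W₁ x) =
          AminusYV A₀ A₁ W₀ W₁ X₀ X₁ (x - Yop X₀ X₁ x) := by
  -- Riccati equations: invariance of the two graphs, tested on `f ⊕ X₀ f` and `X₁ g ⊕ g`,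
  -- which lie in the domain by `hX₀` and `hX₁`.
  have ric0 : ∀ f ∈ DA₀ ⊓ DW₀, X₀ (A₀ f + W₁ (X₀ f)) = W₀ f + A₁ (X₀ f) := fun f hf => by
    have h := hinv0 (f, X₀ f) ⟨hf, hX₀ f hf⟩ (by simp [graphSub0])
    simpa [graphSub0, blockOp, sub_eq_zero] using h
  have ric1 : ∀ g ∈ DA₁ ⊓ DW₁, X₁ (W₀ (X₁ g) + A₁ g) = A₀ (X₁ g) + W₁ g := fun g hg => by
    have h := hinv1 (X₁ g, g) ⟨hX₁ g hg, hg⟩ (by simp [graphSub1])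
    simpa [graphSub1, blockOp, sub_eq_zero] using h
  refine ⟨⟨?_, ?_, ?_⟩, ?_⟩
  · rintro ⟨f, g⟩ ⟨hf, hg⟩
    exact ⟨Submodule.sub_mem _ hf (hX₁ g hg), Submodule.sub_mem _ hg (hX₀ f hf)⟩
  · -- A vector fixed by `Y` lies in both graphs, hence vanishes.
    intro x _ y _ hxy
    have hz : x - y - Yop X₀ X₁ (x - y) = 0 := by
      rw [map_sub, sub_sub_sub_comm]
      exact sub_eq_zero.2 hxy
    have hmem : x - y ∈ graphSub0 X₀ ⊓ graphSub1 X₁ := by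
      have h1 : (x - y).1 - X₁ (x - y).2 = 0 := congrArg Prod.fst hz
      have h2 : (x - y).2 - X₀ (x - y).1 = 0 := congrArg Prod.snd hz
      exact ⟨sub_eq_zero.2 (sub_eq_zero.1 h2).symm, sub_eq_zero.2 (sub_eq_zero.1 h1).symm⟩
    rw [hdisj] at hmem
    exact sub_eq_zero.1 ((Submodule.mem_bot ℂ).1 hmem)
  · -- Splitting `u ⊕ -v` as `(a ⊕ X₀ a) + (X₁ b ⊕ b)` solves `(I - Y) (a ⊕ -b) = u ⊕ v`.
    rintro ⟨u, v⟩ ⟨hu, hv⟩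
    have hm : (u, -v) ∈ (DA₀ ⊓ DW₀).prod (DA₁ ⊓ DW₁) := ⟨hu, Submodule.neg_mem _ hv⟩
    rw [hsplit] at hm
    obtain ⟨⟨a, a'⟩, ⟨ha, ha'⟩, ⟨b', b⟩, ⟨hb, hb'⟩, hab⟩ := Submodule.mem_sup.1 hm
    have ea : X₀ a = a' := by simpa [graphSub0, sub_eq_zero] using ha'
    have eb : X₁ b = b' := by simpa [graphSub1, sub_eq_zero] using hb'
    subst ea eb
    obtain ⟨h1, h2⟩ := Prod.mk.inj hab
    refine ⟨(a, -b), ⟨ha.1, Submodule.neg_mem _ hb.2⟩, ?_⟩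
    rw [eq_neg_iff_add_eq_zero] at h2
    refine Prod.ext ?_ ?_
    · simpa [Yop] using h1
    · have : -b - X₀ a = v := by
        rw [← sub_eq_zero, ← neg_eq_zero, ← h2]
        abel
      simpa [Yop] using this
  · rintro ⟨f, g⟩ ⟨hf, hg⟩
    have h0 := ric0 f hf
    have h1 := ric1 g hg
    rw [map_add, ← sub_eq_zero] at h0 h1
    refine Prod.ext ?_ ?_
    · change A₀ f + W₁ g - X₁ (W₀ f + A₁ g) = A₀ (f - X₁ g) - X₁ (W₀ (f - X₁ g))
      simp only [map_add, map_sub]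
      rw [← sub_eq_zero, ← neg_eq_zero, ← h1]
      abel
    · change W₀ f + A₁ g - X₀ (A₀ f + W₁ g) = A₁ (g - X₀ f) - X₀ (W₁ (g - X₀ f))
      simp only [map_add, map_sub]
      rw [← sub_eq_zero, ← neg_eq_zero, ← h0]
      abel
end
end

section
/- Let G(H₀,X₀) and G(H₁,X₁) be complementary graph subspaces of bounded linear operators X₀ : H₀ → H₁ and X₁ : H₁ → H₀, both invariant for the block operator matrix A + V, and suppose the domain splits, 𝔇 = (𝔇 ∩ G(H₀,X₀)) + (𝔇 ∩ G(H₁,X₁)), and 𝔇 is invariant for X₀ and X₁. Assume in addition that Dom(A₀) ⊆ Dom(W₀) and Dom(A₁) ⊆ Dom(W₁), so that 𝔇 = Dom(A₀) ⊕ Dom(A₁) = Dom(A). Then the restriction of I_H + Y to Dom(A) is a bijection of Dom(A) onto itself, and for every x ∈ Dom(A) one has (A + V)((I_H + Y)x) = (I_H + Y)((A + VY)x), where A + VY is the block diagonal operator (A + VY)(f ⊕ g) = (A₀f + W₁X₀f) ⊕ (A₁g + W₀X₁g) with domain Dom(A); consequently (I_H + Y)⁻¹(A + V)(I_H + Y)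 = A + VY. -/
/-!
`I + Y` sends `f ⊕ g` to `(f ⊕ X₀ f) + (X₁ g ⊕ g)`, the sum of a point of `G(H₀, X₀)` and a point
of `G(H₁, X₁)`. Disjointness of the graphs makes it injective, and the splitting of the domain makes
it surjective on `𝔇`. The operator `A + V` maps each graph into itself, so `(A + V)(f ⊕ X₀ f)` is
determined by its `H₀`-component `A₀ f + W₁ X₀ f`, and `(A + V)(X₁ g ⊕ g)` by its `H₁`-component
`A₁ g + W₀ X₁ g`: these are the two components of `(A + VY)(f ⊕ g)`.
-/


noncomputable section

open Function Set

variable {H₀ H₁ : Type*}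
  [NormedAddCommGroup H₀] [InnerProductSpace ℂ H₀] [CompleteSpace H₀]
  [NormedAddCommGroup H₁] [InnerProductSpace ℂ H₁] [CompleteSpace H₁]

/-- block diagonalization `(I+Y)⁻¹(A+V)(I+Y) = A + VY` in the case
`Dom(A) ⊆ Dom(V)`. Let `G(H₀, X₀)` and `G(H₁, X₁)` be complementary graph subspaces, both
invariant for `A + V` with natural domain `𝔇`; suppose `𝔇` splits and `𝔇` is invariant for
`X₀` and `X₁`.  If moreover `Dom(A₀) ⊆ Dom(W₀)` and `Dom(A₁) ⊆ Dom(W₁)` (so that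
`𝔇 = Dom(A) = Dom(A₀) ⊕ Dom(A₁)`), then `I_H + Y` maps `Dom(A)` bijectively onto itself and
`(A + V)((I_H + Y)x) = (I_H + Y)((A + VY)x)` for every `x ∈ Dom(A)`; consequently
`(I_H + Y)⁻¹(A + V)(I_H + Y) = A + VY`. -/
theorem block_diagonalization_AplusVY
    (A₀ : H₀ →ₗ[ℂ] H₀) (DA₀ : Submodule ℂ H₀) (A₁ : H₁ →ₗ[ℂ] H₁) (DA₁ : Submodule ℂ H₁)
    (W₀ : H₀ →ₗ[ℂ] H₁) (DW₀ : Submodule ℂ H₀) (W₁ : H₁ →ₗ[ℂ] H₀) (DW₁ : Submodule ℂ H₁)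
    (X₀ : H₀ →L[ℂ] H₁) (X₁ : H₁ →L[ℂ] H₀)
    (hsum : graphSub0 X₀ ⊔ graphSub1 X₁ = ⊤)
    (hdisj : graphSub0 X₀ ⊓ graphSub1 X₁ = ⊥)
    (hinv0 : InvariantFor (blockOp A₀ A₁ W₀ W₁) ((DA₀ ⊓ DW₀).prod (DA₁ ⊓ DW₁)) (graphSub0 X₀))
    (hinv1 : InvariantFor (blockOp A₀ A₁ W₀ W₁) ((DA₀ ⊓ DW₀).prod (DA₁ ⊓ DW₁)) (graphSub1 X₁))
    (hsplit : (DA₀ ⊓ DW₀).prod (DA₁ ⊓ DW₁) =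
        (DA₀ ⊓ DW₀).prod (DA₁ ⊓ DW₁) ⊓ graphSub0 X₀ ⊔
          (DA₀ ⊓ DW₀).prod (DA₁ ⊓ DW₁) ⊓ graphSub1 X₁)
    (hX₀ : ∀ f ∈ DA₀ ⊓ DW₀, X₀ f ∈ DA₁ ⊓ DW₁)
    (hX₁ : ∀ g ∈ DA₁ ⊓ DW₁, X₁ g ∈ DA₀ ⊓ DW₀)
    (hAW₀ : DA₀ ≤ DW₀) (hAW₁ : DA₁ ≤ DW₁) :
    Set.BijOn (fun x : H₀ × H₁ => x + Yop X₀ X₁ x)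
        (DA₀.prod DA₁ : Set (H₀ × H₁)) (DA₀.prod DA₁ : Set (H₀ × H₁)) ∧
      ∀ x ∈ DA₀.prod DA₁,
        blockOp A₀ A₁ W₀ W₁ (x + Yop X₀ X₁ x) =
          AplusVY A₀ A₁ W₀ W₁ X₀ X₁ x + Yop X₀ X₁ (AplusVY A₀ A₁ W₀ W₁ X₀ X₁ x) := by
  rw [inf_eq_left.mpr hAW₀, inf_eq_left.mpr hAW₁] at *
  have mem0 : ∀ x : H₀ × H₁, x ∈ graphSub0 X₀ ↔ X₀ x.1 = x.2 := fun x => by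
    simp [graphSub0, sub_eq_zero]
  have mem1 : ∀ x : H₀ × H₁, x ∈ graphSub1 X₁ ↔ X₁ x.2 = x.1 := fun x => by
    simp [graphSub1, sub_eq_zero]
  have hY : ∀ x : H₀ × H₁, x + Yop X₀ X₁ x = (x.1 + X₁ x.2, x.2 + X₀ x.1) := fun x => rfl
  refine ⟨⟨?_, ?_, ?_⟩, ?_⟩
  · rintro ⟨f, g⟩ ⟨hf, hg⟩
    exact ⟨DA₀.add_mem hf (hX₁ g hg), DA₁.add_mem hg (hX₀ f hf)⟩
  · -- If `z + Y z = 0`, then `z.1 ⊕ X₀ z.1 = -(X₁ z.2 ⊕ z.2)` lies in both graphs.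
    have key : ∀ z : H₀ × H₁, z + Yop X₀ X₁ z = 0 → z = 0 := by
      rintro ⟨f, g⟩ h
      rw [hY, Prod.mk_eq_zero] at h
      obtain ⟨h1, h2⟩ := h
      have e1 : X₁ g = -f := eq_neg_of_add_eq_zero_right h1
      have e2 : X₀ f = -g := eq_neg_of_add_eq_zero_right h2
      have hmem : ((f, -g) : H₀ × H₁) ∈ graphSub0 X₀ ⊓ graphSub1 X₁ :=
        ⟨(mem0 _).2 e2, (mem1 _).2 (by simp [e1])⟩
      rw [hdisj, Submodule.mem_bot] at hmem
      simpa using hmem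
    intro x _ y _ hxy
    refine sub_eq_zero.mp (key (x - y) ?_)
    rw [map_sub, sub_add_sub_comm]
    exact sub_eq_zero.mpr hxy
  · intro z hz
    have hz' : z ∈ DA₀.prod DA₁ := hz
    rw [hsplit] at hz'
    obtain ⟨u, ⟨hu, hu0⟩, v, ⟨hv, hv1⟩, rfl⟩ := Submodule.mem_sup.mp hz'
    refine ⟨(u.1, v.2), ⟨hu.1, hv.2⟩, ?_⟩
    change (u.1, v.2) + Yop X₀ X₁ (u.1, v.2) = u + v
    rw [hY]
    ext
    · simp [(mem1 v).1 hv1]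
    · simp [(mem0 u).1 hu0, add_comm]
  · rintro ⟨f, g⟩ ⟨hf, hg⟩
    have h0 : X₀ (A₀ f + W₁ (X₀ f)) = W₀ f + A₁ (X₀ f) :=
      (mem0 _).1 (hinv0 (f, X₀ f) ⟨hf, hX₀ f hf⟩ ((mem0 _).2 rfl))
    have h1 : X₁ (W₀ (X₁ g) + A₁ g) = A₀ (X₁ g) + W₁ g :=
      (mem1 _).1 (hinv1 (X₁ g, g) ⟨hX₁ g hg, hg⟩ ((mem1 _).2 rfl))
    rw [hY, hY]
    change (A₀ (f + X₁ g) + W₁ (g + X₀ f), W₀ (f + X₁ g) + A₁ (g + X₀ f)) =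
      ((A₀ f + W₁ (X₀ f)) + X₁ (A₁ g + W₀ (X₁ g)),
        (A₁ g + W₀ (X₁ g)) + X₀ (A₀ f + W₁ (X₀ f)))
    rw [add_comm (A₁ g), h1, h0]
    simp only [map_add]
    ext <;> dsimp only <;> abel
end
end

section
/- Let X₀ : H₀ → H₁ and X₁ : H₁ → H₀ be bounded linear operators whose graph subspaces G(H₀,X₀) and G(H₁,X₁) are both invariant for the block operator matrix A + V. Then for every x ∈ 𝔇 with Yx ∈ 𝔇 the two identities (I_H − Y)((A + V)x) = (A − YV)((I_H − Y)x) and (A + V)((I_H + Y)x) = (I_H + Y)((A + VY)x) hold, where A − YV is the block diagonal operator with entries A₀ − X₁W₀ and A₁ − X₀W₁, and A + VY is the block diagonal operator with entries A₀ + W₁X₀ and A₁ + W₀X₁. -/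
/-!
For `f ∈ 𝔇₀` with `X₀ f ∈ 𝔇₁`, invariance of `G(H₀, X₀)` applied to `f ⊕ X₀ f` is exactly the
Riccati equation `X₀ (A₀ f + W₁ X₀ f) = W₀ f + A₁ X₀ f`; symmetrically, invariance of `G(H₁, X₁)`
applied to `X₁ g ⊕ g` gives `X₁ (W₀ X₁ g + A₁ g) = A₀ X₁ g + W₁ g`. The condition `Y x ∈ 𝔇` for
`x = f ⊕ g` says that both equations are available, and each component of the two identities is
one of them after expanding by linearity.
-/

noncomputable section

open Function Set

variable {H₀ H₁ : Type*}
  [NormedAddCommGroup H₀] [InnerProductSpace ℂ H₀] [CompleteSpace H₀]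
  [NormedAddCommGroup H₁] [InnerProductSpace ℂ H₁] [CompleteSpace H₁]

/-- the combined Riccati identities. Let the graph subspaces `G(H₀, X₀)`
and `G(H₁, X₁)` of bounded operators `X₀ : H₀ → H₁` and `X₁ : H₁ → H₀` both be invariant for
the block operator matrix `A + V` with natural domain `𝔇`.  Then for every `x ∈ 𝔇` with
`Y x ∈ 𝔇` one has `(I_H − Y)((A + V)x) = (A − YV)((I_H − Y)x)` and
`(A + V)((I_H + Y)x) = (I_H + Y)((A + VY)x)`. -/
theorem riccati_identities_on_D
    (A₀ : H₀ →ₗ[ℂ] H₀) (DA₀ : Submodule ℂ H₀) (A₁ : H₁ →ₗ[ℂ] H₁) (DA₁ : Submodule ℂ H₁)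
    (W₀ : H₀ →ₗ[ℂ] H₁) (DW₀ : Submodule ℂ H₀) (W₁ : H₁ →ₗ[ℂ] H₀) (DW₁ : Submodule ℂ H₁)
    (X₀ : H₀ →L[ℂ] H₁) (X₁ : H₁ →L[ℂ] H₀)
    (hinv0 : InvariantFor (blockOp A₀ A₁ W₀ W₁) ((DA₀ ⊓ DW₀).prod (DA₁ ⊓ DW₁)) (graphSub0 X₀))
    (hinv1 : InvariantFor (blockOp A₀ A₁ W₀ W₁) ((DA₀ ⊓ DW₀).prod (DA₁ ⊓ DW₁)) (graphSub1 X₁)) :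
    ∀ x ∈ (DA₀ ⊓ DW₀).prod (DA₁ ⊓ DW₁),
      Yop X₀ X₁ x ∈ (DA₀ ⊓ DW₀).prod (DA₁ ⊓ DW₁) →
        (blockOp A₀ A₁ W₀ W₁ x - Yop X₀ X₁ (blockOp A₀ A₁ W₀ W₁ x) =
            AminusYV A₀ A₁ W₀ W₁ X₀ X₁ (x - Yop X₀ X₁ x)) ∧
          blockOp A₀ A₁ W₀ W₁ (x + Yop X₀ X₁ x) =
            AplusVY A₀ A₁ W₀ W₁ X₀ X₁ x + Yop X₀ X₁ (AplusVY A₀ A₁ W₀ W₁ X₀ X₁ x) := by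
  rintro ⟨f, g⟩ ⟨hf, hg⟩ ⟨hX₁g, hX₀f⟩
  have r₀ : X₀ (A₀ f) + X₀ (W₁ (X₀ f)) = W₀ f + A₁ (X₀ f) := by
    simpa [graphSub0, blockOp, sub_eq_zero] using
      hinv0 (f, X₀ f) ⟨hf, hX₀f⟩ (by simp [graphSub0])
  have r₁ : X₁ (W₀ (X₁ g)) + X₁ (A₁ g) = A₀ (X₁ g) + W₁ g := by
    simpa [graphSub1, blockOp, sub_eq_zero] using
      hinv1 (X₁ g, g) ⟨hX₁g, hg⟩ (by simp [graphSub1])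
  refine ⟨Prod.ext ?_ ?_, Prod.ext ?_ ?_⟩ <;> simp [blockOp, Yop, AminusYV, AplusVY]
  · linear_combination (norm := module) -r₁
  · linear_combination (norm := module) -r₀
  · linear_combination (norm := module) -r₁
  · linear_combination (norm := module) -r₀
end
end

section
/- Let X₀ : H₀ → H₁ be a bounded linear operator such that its graph subspace G(H₀,X₀) is invariant for the block operator matrix A + V, and suppose X₀ maps 𝔇₀ into 𝔇₁. Then for all f ∈ 𝔇₀ and g ∈ 𝔇₁ one has L⁻(A + V)L⁺(f ⊕ g) = ((A₀ + W₁X₀)f + W₁g) ⊕ ((A₁ − X₀W₁)g), where L⁺(f ⊕ g) = f ⊕ (X₀f + g) and L⁻(u ⊕ v) = u ⊕ (v − X₀u); in particular, with T : H₀ → G(H₀,X₀) given by Tf = f ⊕ X₀f, one has T⁻¹(A + V)Tf = (A₀ + W₁X₀)f for all f ∈ 𝔇₀, so the restriction of A + V to G(H₀,X₀) is similar to (A₀ + W₁X₀)|_{𝔇₀}. -/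
/-!
Invariance of the graph of `X₀` under `A + V`, tested on `f ⊕ X₀ f` with `f ∈ 𝔇₀` (a vector of
`𝔇` because `X₀` maps `𝔇₀` into `𝔇₁`), is exactly the Riccati equation
`X₀ (A₀ + W₁ X₀) f = (W₀ + A₁ X₀) f`. The second component of `L⁻ (A + V) L⁺ (f ⊕ g)` is
`(W₀ + A₁ X₀) f - X₀ (A₀ + W₁ X₀) f + (A₁ - X₀ W₁) g`, whose `f`-part vanishes by this equation;
the first component involves no cancellation. The intertwining relation for `T` is the same
equation read componentwise.
-/

noncomputable section

open Function Set

variable {H₀ H₁ : Type*}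
  [NormedAddCommGroup H₀] [InnerProductSpace ℂ H₀] [CompleteSpace H₀]
  [NormedAddCommGroup H₁] [InnerProductSpace ℂ H₁] [CompleteSpace H₁]

/-- block triangular representation, Lemma. Let `X₀ : H₀ → H₁` be a
bounded operator whose graph `G(H₀, X₀)` is invariant for `A + V` (natural domain `𝔇`), and
suppose `X₀` maps `𝔇₀` into `𝔇₁`.  Then for all `f ∈ 𝔇₀` and `g ∈ 𝔇₁`,
`L⁻ (A + V) L⁺ (f ⊕ g) = ((A₀ + W₁X₀)f + W₁ g) ⊕ ((A₁ − X₀W₁) g)`, where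
`L⁺(f ⊕ g) = f ⊕ (X₀ f + g)` and `L⁻(u ⊕ v) = u ⊕ (v − X₀ u)`; in particular, with
`T f = f ⊕ X₀ f`, one has `(A + V)(T f) = T ((A₀ + W₁X₀) f)` for all `f ∈ 𝔇₀`, so the
restriction of `A + V` to `G(H₀, X₀)` is similar to `(A₀ + W₁X₀)|_{𝔇₀}`. -/
theorem block_triangular_representation
    (A₀ : H₀ →ₗ[ℂ] H₀) (DA₀ : Submodule ℂ H₀) (A₁ : H₁ →ₗ[ℂ] H₁) (DA₁ : Submodule ℂ H₁)
    (W₀ : H₀ →ₗ[ℂ] H₁) (DW₀ : Submodule ℂ H₀) (W₁ : H₁ →ₗ[ℂ] H₀) (DW₁ : Submodule ℂ H₁)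
    (X₀ : H₀ →L[ℂ] H₁)
    (hinv0 : InvariantFor (blockOp A₀ A₁ W₀ W₁) ((DA₀ ⊓ DW₀).prod (DA₁ ⊓ DW₁)) (graphSub0 X₀))
    (hX₀ : ∀ f ∈ DA₀ ⊓ DW₀, X₀ f ∈ DA₁ ⊓ DW₁) :
    (∀ f ∈ DA₀ ⊓ DW₀, ∀ g ∈ DA₁ ⊓ DW₁,
      (fun p : H₀ × H₁ => (p.1, p.2 - X₀ p.1)) (blockOp A₀ A₁ W₀ W₁ (f, X₀ f + g)) =
        (A₀ f + W₁ (X₀ f) + W₁ g, A₁ g - X₀ (W₁ g))) ∧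
    ∀ f ∈ DA₀ ⊓ DW₀,
      blockOp A₀ A₁ W₀ W₁ (f, X₀ f) =
        (A₀ f + W₁ (X₀ f), X₀ (A₀ f + W₁ (X₀ f))) := by
  -- Invariance of the graph, tested on `f ⊕ X₀ f`, is the Riccati equation on `𝔇₀`.
  have riccati : ∀ f ∈ DA₀ ⊓ DW₀, X₀ (A₀ f + W₁ (X₀ f)) = W₀ f + A₁ (X₀ f) := by
    intro f hf
    have h := hinv0 (f, X₀ f) ⟨hf, hX₀ f hf⟩ (by simp [graphSub0])
    exact sub_eq_zero.mp h
  refine ⟨fun f hf g _ => Prod.ext ?_ ?_, fun f hf => Prod.ext ?_ ?_⟩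
  · simp [blockOp, add_assoc]
  · have h := riccati f hf
    change W₀ f + A₁ (X₀ f + g) - X₀ (A₀ f + W₁ (X₀ f + g)) = A₁ g - X₀ (W₁ g)
    rw [map_add A₁, map_add W₁, ← add_assoc, ← add_assoc, map_add X₀ (A₀ f + W₁ (X₀ f)), h]
    abel
  · simp [blockOp]
  · rw [riccati f hf]
    simp [blockOp]
end
end

section
/- Let X₀ : H₀ → H₁ be a bounded linear operator such that its graph subspace G(H₀,X₀) is invariant for the block operator matrix A + V. Suppose there is a complex number λ such that both A + V − λ : 𝔇 → H and A₁ − λ − X₀W₁ : 𝔇₁ → H₁ are bijective. Then the graph G(H₀,X₀) is invariant for the inverse (A + V − λ)⁻¹ : H → H if and only if X₀ maps 𝔇₀ into 𝔇₁. -/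
/-! The idea is that a point `f ⊕ g` of the domain is sent by `A + V − lam` into the graph of `X₀`
exactly when `g` solves `(A₁ − lam − X₀W₁) g = X₀ (A₀ − lam) f − W₀ f`.

* If the resolvent preserves the graph and `f ∈ 𝔇₀`, surjectivity of `A₁ − lam − X₀W₁` gives a
  solution `g ∈ 𝔇₁`; then `f ⊕ g` is the resolvent applied to a point of the graph, so `X₀ f = g`.
* If `X₀` maps `𝔇₀` into `𝔇₁`, then invariance of the graph at `f ⊕ X₀ f` says that `X₀ f` solves
  this equation, and injectivity of `A₁ − lam − X₀W₁` shows that it is the only solution.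
-/

noncomputable section

open Function Set

variable {H₀ H₁ : Type*}
  [NormedAddCommGroup H₀] [InnerProductSpace ℂ H₀] [CompleteSpace H₀]
  [NormedAddCommGroup H₁] [InnerProductSpace ℂ H₁] [CompleteSpace H₁]

theorem mem_graphSub0_iff {H₀ H₁ : Type*}
    [NormedAddCommGroup H₀] [InnerProductSpace ℂ H₀]
    [NormedAddCommGroup H₁] [InnerProductSpace ℂ H₁]
    (X₀ : H₀ →L[ℂ] H₁) (f : H₀) (g : H₁) :
    (f, g) ∈ graphSub0 X₀ ↔ X₀ f = g := by
  simp [graphSub0, sub_eq_zero]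

theorem blockOp_mk {H₀ H₁ : Type*}
    [NormedAddCommGroup H₀] [InnerProductSpace ℂ H₀]
    [NormedAddCommGroup H₁] [InnerProductSpace ℂ H₁]
    (A₀ : H₀ →ₗ[ℂ] H₀) (A₁ : H₁ →ₗ[ℂ] H₁)
    (W₀ : H₀ →ₗ[ℂ] H₁) (W₁ : H₁ →ₗ[ℂ] H₀) (f : H₀) (g : H₁) :
    blockOp A₀ A₁ W₀ W₁ (f, g) = (A₀ f + W₁ g, W₀ f + A₁ g) := rfl

/-- Theorem, single graph subspace. Let `X₀ : H₀ → H₁` be a bounded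
operator whose graph `G(H₀, X₀)` is invariant for `A + V` (natural domain `𝔇`), and let
`lam` be a complex number such that both `A + V − lam : 𝔇 → H` and
`A₁ − lam − X₀W₁ : 𝔇₁ → H₁` are bijective, the (everywhere defined) inverse of the former
being `R = (A + V − lam)⁻¹ : H → H`.  Then `G(H₀, X₀)` is invariant for `(A + V − lam)⁻¹` if
and only if `X₀` maps `𝔇₀` into `𝔇₁`. -/
theorem single_graph_resolvent_invariant_iff
    (A₀ : H₀ →ₗ[ℂ] H₀) (DA₀ : Submodule ℂ H₀) (A₁ : H₁ →ₗ[ℂ] H₁) (DA₁ : Submodule ℂ H₁)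
    (W₀ : H₀ →ₗ[ℂ] H₁) (DW₀ : Submodule ℂ H₀) (W₁ : H₁ →ₗ[ℂ] H₀) (DW₁ : Submodule ℂ H₁)
    (X₀ : H₀ →L[ℂ] H₁)
    (hinv0 : InvariantFor (blockOp A₀ A₁ W₀ W₁) ((DA₀ ⊓ DW₀).prod (DA₁ ⊓ DW₁)) (graphSub0 X₀))
    (lam : ℂ)
    (hbijB : Function.Bijective fun x : (DA₀ ⊓ DW₀).prod (DA₁ ⊓ DW₁) =>
      blockOp A₀ A₁ W₀ W₁ (x : H₀ × H₁) - lam • (x : H₀ × H₁))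
    (hbij1 : Function.Bijective fun g : (DA₁ ⊓ DW₁ : Submodule ℂ H₁) =>
      A₁ (g : H₁) - lam • (g : H₁) - X₀ (W₁ (g : H₁)))
    (R : H₀ × H₁ → H₀ × H₁)
    (hR : ∀ y : H₀ × H₁, R y ∈ (DA₀ ⊓ DW₀).prod (DA₁ ⊓ DW₁) ∧
      blockOp A₀ A₁ W₀ W₁ (R y) - lam • R y = y) :
    (∀ y ∈ graphSub0 X₀, R y ∈ graphSub0 X₀) ↔ ∀ f ∈ DA₀ ⊓ DW₀, X₀ f ∈ DA₁ ⊓ DW₁ := by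
  constructor
  · intro hres f hf
    obtain ⟨⟨g, hg⟩, hgeq⟩ := hbij1.2 (X₀ (A₀ f - lam • f) - W₀ f)
    dsimp only at hgeq
    have hy : (blockOp A₀ A₁ W₀ W₁ (f, g) - lam • (f, g)) ∈ graphSub0 X₀ := by
      rw [blockOp_mk, Prod.smul_mk, Prod.mk_sub_mk, mem_graphSub0_iff]
      simp only [map_add, map_sub, map_smul] at hgeq ⊢
      linear_combination (norm := module) -hgeq
    -- injectivity of `A + V − lam` identifies `R` of this graph point with `f ⊕ g`
    have hRy : R (blockOp A₀ A₁ W₀ W₁ (f, g) - lam • (f, g)) = (f, g) :=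
      congrArg Subtype.val (hbijB.1 (a₁ := ⟨_, (hR _).1⟩) (a₂ := ⟨(f, g), hf, hg⟩) (hR _).2)
    have hmem := hres _ hy
    rw [hRy, mem_graphSub0_iff] at hmem
    rwa [hmem]
  · rintro hX ⟨u, v⟩ hy
    obtain ⟨hdom, heq⟩ := hR (u, v)
    generalize R (u, v) = x at hdom heq ⊢
    obtain ⟨f, g⟩ := x
    obtain ⟨hf, hg⟩ := hdom
    have hinv := hinv0 (f, X₀ f) ⟨hf, hX f hf⟩ ((mem_graphSub0_iff X₀ f _).2 rfl)
    rw [blockOp_mk, mem_graphSub0_iff] at hinv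
    rw [mem_graphSub0_iff] at hy ⊢
    rw [blockOp_mk, Prod.smul_mk, Prod.mk_sub_mk, Prod.mk.injEq] at heq
    obtain ⟨hu, hv⟩ := heq
    rw [← hu, ← hv] at hy
    refine congrArg Subtype.val (hbij1.1 (a₁ := ⟨X₀ f, hX f hf⟩) (a₂ := ⟨g, hg⟩) ?_)
    simp only [map_add, map_sub, map_smul] at hinv hy ⊢
    linear_combination (norm := module) hy - hinv
end
end

section
/- Let X₀ : H₀ → H₁ be a bounded linear operator such that its graph subspace G(H₀,X₀) is invariant for the block operator matrix A + V, and let λ be a complex number. Suppose that Ran((A + V − λ)|_{𝔇 ∩ G(H₀,X₀)}) = G(H₀,X₀), that A + V − λ : 𝔇 → H is injective, and that A₁ − λ − X₀W₁ : 𝔇₁ → H₁ is surjective. Then X₀ maps 𝔇₀ into 𝔇₁. -/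
/-! For `f ∈ 𝔇₀` and `g ∈ 𝔇₁`, the vector `(A + V - lam)(f ⊕ g)` lies on the graph of `X₀` exactly
when `(A₁ - lam - X₀W₁) g = X₀ (A₀ - lam) f - W₀ f`. Surjectivity of `A₁ - lam - X₀W₁` provides such
a `g`. By the range hypothesis this vector is also the image of an element of `𝔇` on the graph;
injectivity of `A + V - lam` identifies that element with `f ⊕ g`, so `X₀ f = g ∈ 𝔇₁`. -/

noncomputable section

open Function Set

variable {H₀ H₁ : Type*}
  [NormedAddCommGroup H₀] [InnerProductSpace ℂ H₀] [CompleteSpace H₀]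
  [NormedAddCommGroup H₁] [InnerProductSpace ℂ H₁] [CompleteSpace H₁]

/-- Remark, part (a). Let `X₀ : H₀ → H₁` be a bounded operator whose
graph `G(H₀, X₀)` is invariant for `A + V` (natural domain `𝔇`), and let `lam` be a complex
number.  If `Ran((A + V − lam)|_{𝔇 ∩ G(H₀,X₀)}) = G(H₀,X₀)`, `A + V − lam : 𝔇 → H` is
injective, and `A₁ − lam − X₀W₁ : 𝔇₁ → H₁` is surjective, then `X₀` maps `𝔇₀` into `𝔇₁`. -/
theorem angular_domain_invariance_of_range_eq
    (A₀ : H₀ →ₗ[ℂ] H₀) (DA₀ : Submodule ℂ H₀) (A₁ : H₁ →ₗ[ℂ] H₁) (DA₁ : Submodule ℂ H₁)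
    (W₀ : H₀ →ₗ[ℂ] H₁) (DW₀ : Submodule ℂ H₀) (W₁ : H₁ →ₗ[ℂ] H₀) (DW₁ : Submodule ℂ H₁)
    (X₀ : H₀ →L[ℂ] H₁)
    (hinv0 : InvariantFor (blockOp A₀ A₁ W₀ W₁) ((DA₀ ⊓ DW₀).prod (DA₁ ⊓ DW₁)) (graphSub0 X₀))
    (lam : ℂ)
    (hran : {z : H₀ × H₁ | ∃ x ∈ (DA₀ ⊓ DW₀).prod (DA₁ ⊓ DW₁) ⊓ graphSub0 X₀,
        blockOp A₀ A₁ W₀ W₁ x - lam • x = z} = (graphSub0 X₀ : Set (H₀ × H₁)))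
    (hinj : Function.Injective fun x : (DA₀ ⊓ DW₀).prod (DA₁ ⊓ DW₁) =>
      blockOp A₀ A₁ W₀ W₁ (x : H₀ × H₁) - lam • (x : H₀ × H₁))
    (hsurj1 : ∀ h : H₁, ∃ g ∈ DA₁ ⊓ DW₁, A₁ g - lam • g - X₀ (W₁ g) = h) :
    ∀ f ∈ DA₀ ⊓ DW₀, X₀ f ∈ DA₁ ⊓ DW₁ := by
  intro f hf
  -- This right-hand side makes `(A + V - lam)(f ⊕ g)` a point of the graph of `X₀`.
  obtain ⟨g, hg, hgeq⟩ := hsurj1 (X₀ (A₀ f - lam • f) - W₀ f)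
  have hmem : blockOp A₀ A₁ W₀ W₁ (f, g) - lam • (f, g) ∈ (graphSub0 X₀ : Set (H₀ × H₁)) := by
    have h : X₀ (A₀ f + W₁ g - lam • f) - (W₀ f + A₁ g - lam • g) = 0 := by
      have e : X₀ (A₀ f + W₁ g - lam • f) = X₀ (A₀ f - lam • f) + X₀ (W₁ g) := by
        rw [← map_add]; congr 1; abel
      rw [e, ← sub_eq_zero.mpr hgeq.symm]; abel
    exact h
  rw [← hran] at hmem
  obtain ⟨x, ⟨hxD, hxG⟩, hx⟩ := hmem
  have hxfg : x = (f, g) :=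
    congrArg Subtype.val (@hinj ⟨x, hxD⟩ ⟨(f, g), hf, hg⟩ hx)
  subst hxfg
  have hXf : X₀ f - g = 0 := hxG
  rw [sub_eq_zero.mp hXf]
  exact hg
end
end

section
/- Let X₀ : H₀ → H₁ be a bounded linear operator such that its graph subspace G(H₀,X₀) is invariant for the block operator matrix A + V and such that X₀ maps 𝔇₀ into 𝔇₁, and let λ be a complex number. If A + V − λ : 𝔇 → H is surjective and A₁ − λ − X₀W₁ : 𝔇₁ → H₁ is injective, then Ran((A + V − λ)|_{𝔇 ∩ G(H₀,X₀)}) = G(H₀,X₀). -/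
/-!
Invariance of the graph `G` gives the inclusion of the range in `G`. Conversely, for `z` in `G`,
choose `f ⊕ g` in the domain with `(A + V - lam) (f ⊕ g) = z`. Since `X₀ f` lies in `𝔇₁`, the
vector `f ⊕ X₀ f` is in the domain and in `G`, so its image is in `G` by invariance. Subtracting,
`(A + V - lam) (0 ⊕ h)` is in `G` for `h = g - X₀ f`, which says `(A₁ - lam - X₀ W₁) h = 0`.
Injectivity forces `h = 0`, so the preimage `f ⊕ g` was already in `G`.
-/

noncomputable section

open Function Set

variable {H₀ H₁ : Type*}
  [NormedAddCommGroup H₀] [InnerProductSpace ℂ H₀] [CompleteSpace H₀]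
  [NormedAddCommGroup H₁] [InnerProductSpace ℂ H₁] [CompleteSpace H₁]

/-- Remark, part (b). Let `X₀ : H₀ → H₁` be a bounded operator whose
graph `G(H₀, X₀)` is invariant for `A + V` (natural domain `𝔇`) and which maps `𝔇₀` into
`𝔇₁`, and let `lam` be a complex number.  If `A + V − lam : 𝔇 → H` is surjective and
`A₁ − lam − X₀W₁ : 𝔇₁ → H₁` is injective, then
`Ran((A + V − lam)|_{𝔇 ∩ G(H₀,X₀)}) = G(H₀,X₀)`. -/
theorem range_eq_of_angular_domain_invariance
    (A₀ : H₀ →ₗ[ℂ] H₀) (DA₀ : Submodule ℂ H₀) (A₁ : H₁ →ₗ[ℂ] H₁) (DA₁ : Submodule ℂ H₁)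
    (W₀ : H₀ →ₗ[ℂ] H₁) (DW₀ : Submodule ℂ H₀) (W₁ : H₁ →ₗ[ℂ] H₀) (DW₁ : Submodule ℂ H₁)
    (X₀ : H₀ →L[ℂ] H₁)
    (hinv0 : InvariantFor (blockOp A₀ A₁ W₀ W₁) ((DA₀ ⊓ DW₀).prod (DA₁ ⊓ DW₁)) (graphSub0 X₀))
    (hX₀ : ∀ f ∈ DA₀ ⊓ DW₀, X₀ f ∈ DA₁ ⊓ DW₁)
    (lam : ℂ)
    (hsurj : ∀ z : H₀ × H₁, ∃ x ∈ (DA₀ ⊓ DW₀).prod (DA₁ ⊓ DW₁),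
      blockOp A₀ A₁ W₀ W₁ x - lam • x = z)
    (hinj1 : Function.Injective fun g : (DA₁ ⊓ DW₁ : Submodule ℂ H₁) =>
      A₁ (g : H₁) - lam • (g : H₁) - X₀ (W₁ (g : H₁))) :
    {z : H₀ × H₁ | ∃ x ∈ (DA₀ ⊓ DW₀).prod (DA₁ ⊓ DW₁) ⊓ graphSub0 X₀,
        blockOp A₀ A₁ W₀ W₁ x - lam • x = z} = (graphSub0 X₀ : Set (H₀ × H₁)) := by
  ext z
  constructor
  · rintro ⟨x, ⟨hxD, hxG⟩, rfl⟩
    exact (graphSub0 X₀).sub_mem (hinv0 x hxD hxG) ((graphSub0 X₀).smul_mem lam hxG)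
  · intro hz
    obtain ⟨⟨f, g⟩, ⟨hf, hg⟩, hx⟩ := hsurj z
    have hyD : ((f, X₀ f) : H₀ × H₁) ∈ (DA₀ ⊓ DW₀).prod (DA₁ ⊓ DW₁) := ⟨hf, hX₀ f hf⟩
    have hyG : ((f, X₀ f) : H₀ × H₁) ∈ graphSub0 X₀ := by simp [graphSub0]
    -- The image of `0 ⊕ (g - X₀ f)` under `A + V - lam` lies in the graph.
    have hdiff : blockOp A₀ A₁ W₀ W₁ (0, g - X₀ f) - lam • ((0, g - X₀ f) : H₀ × H₁)
        ∈ graphSub0 X₀ := by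
      have hsplit : ((0, g - X₀ f) : H₀ × H₁) = (f, g) - (f, X₀ f) := by simp
      rw [hsplit, map_sub, smul_sub, sub_sub_sub_comm, hx]
      exact (graphSub0 X₀).sub_mem hz
        ((graphSub0 X₀).sub_mem (hinv0 _ hyD hyG) ((graphSub0 X₀).smul_mem lam hyG))
    have hker : X₀ (W₁ (g - X₀ f)) = A₁ (g - X₀ f) - lam • (g - X₀ f) := by
      have h : X₀ ((A₀ 0 + W₁ (g - X₀ f)) - lam • (0 : H₀))
          = (W₀ 0 + A₁ (g - X₀ f)) - lam • (g - X₀ f) :=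
        sub_eq_zero.mp (LinearMap.mem_ker.mp hdiff)
      rwa [map_zero, map_zero, smul_zero, zero_add, zero_add, sub_zero] at h
    have hzero : (⟨g - X₀ f, Submodule.sub_mem _ hg (hX₀ f hf)⟩ : (DA₁ ⊓ DW₁ : Submodule ℂ H₁))
        = 0 := by
      apply hinj1
      change A₁ (g - X₀ f) - lam • (g - X₀ f) - X₀ (W₁ (g - X₀ f))
        = A₁ 0 - lam • (0 : H₁) - X₀ (W₁ 0)
      rw [hker]
      simp
    have hgf : g = X₀ f := sub_eq_zero.mp (congrArg Subtype.val hzero)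
    subst hgf
    exact ⟨(f, X₀ f), ⟨hyD, hyG⟩, hx⟩
end
end

section
/- Assume Dom(A₀) ⊆ Dom(W₀) and Dom(A₁) ⊆ Dom(W₁), so that the block operator matrix B = A + V has domain Dom(A) = Dom(A₀) ⊕ Dom(A₁), and let X₀ : H₀ → H₁ and X₁ : H₁ → H₀ be bounded linear operators with associated off-diagonal operator Y. Suppose λ is a complex number such that A − λ : Dom(A) → H is bijective, and suppose there is a constant c ≥ 0 with max{1, ‖Y‖}·c < 1 such that ‖V((A − λ)⁻¹x)‖ ≤ c‖x‖ for all x ∈ H. Then both A + V − λ : Dom(A) → H and A − YV − λ : Dom(A) → H are bijective, i.e. λ is a common point of the resolvent sets of A + V and A − YV. -/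
/-!
Neumann-series argument. Write `S = A - lam`, a bijection `Dom(A) → H` with inverse `R`. For a
perturbation `P` with `‖P R x‖ ≤ q ‖x‖` and `q < 1`, the factorization `S + P = (1 + P R) S` on
`Dom(A)` shows that `S + P` is bijective, because `1 + P R` is invertible in the Banach algebra of
bounded operators on `H` (`bijective_add_of_relative_bound`). Both claims are instances: `P = V`,
where `V R` has bound `c`, and `P = -YV`, where `Y V R` has bound `ny * c`; the choice
`q = max 1 ny * c` serves both.
-/

noncomputable section

open Function Set

variable {H₀ H₁ : Type*}
  [NormedAddCommGroup H₀] [InnerProductSpace ℂ H₀] [CompleteSpace H₀]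
  [NormedAddCommGroup H₁] [InnerProductSpace ℂ H₁] [CompleteSpace H₁]

/-- The diagonal part `A(f ⊕ g) = A₀ f ⊕ A₁ g`. -/
def diagOp (A₀ : H₀ →ₗ[ℂ] H₀) (A₁ : H₁ →ₗ[ℂ] H₁) : H₀ × H₁ →ₗ[ℂ] H₀ × H₁ :=
  LinearMap.prod (A₀ ∘ₗ LinearMap.fst ℂ H₀ H₁) (A₁ ∘ₗ LinearMap.snd ℂ H₀ H₁)

/-- The off-diagonal part `V(f ⊕ g) = W₁ g ⊕ W₀ f`. -/
def offDiagOp (W₀ : H₀ →ₗ[ℂ] H₁) (W₁ : H₁ →ₗ[ℂ] H₀) : H₀ × H₁ →ₗ[ℂ] H₀ × H₁ :=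
  LinearMap.prod (W₁ ∘ₗ LinearMap.snd ℂ H₀ H₁) (W₀ ∘ₗ LinearMap.fst ℂ H₀ H₁)

/-- The Hilbert space norm of `f ⊕ g` in the orthogonal direct sum `H = H₀ ⊕ H₁`. -/
def hilbertNorm (x : H₀ × H₁) : ℝ := Real.sqrt (‖x.1‖ ^ 2 + ‖x.2‖ ^ 2)

/-- `H₀ × H₁` carries the sup norm, so the Hilbert space structure of `H₀ ⊕ H₁` is that of the
type synonym `WithLp 2 (H₀ × H₁)`. -/
lemma hilbertNorm_eq_norm_toLp (x : H₀ × H₁) : hilbertNorm x = ‖WithLp.toLp 2 x‖ :=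
  (WithLp.prod_norm_eq_of_L2 (WithLp.toLp 2 x)).symm

lemma hilbertNorm_nonneg (x : H₀ × H₁) : 0 ≤ hilbertNorm x := Real.sqrt_nonneg _

lemma hilbertNorm_neg (x : H₀ × H₁) : hilbertNorm (-x) = hilbertNorm x := by
  simp [hilbertNorm]

/-- Invertibility of `1 + K` for a linear map `K` with operator norm less than one with respect to
`hilbertNorm`. -/
lemma bijective_add_of_hilbertNorm_le (K : H₀ × H₁ →ₗ[ℂ] H₀ × H₁) (q : ℝ) (hq₀ : 0 ≤ q)
    (hq : q < 1) (hK : ∀ x, hilbertNorm (K x) ≤ q * hilbertNorm x) :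
    Function.Bijective fun x => x + K x := by
  let e := WithLp.linearEquiv 2 ℂ (H₀ × H₁)
  let L : WithLp 2 (H₀ × H₁) →L[ℂ] WithLp 2 (H₀ × H₁) :=
    (e.symm.toLinearMap ∘ₗ K ∘ₗ e.toLinearMap).mkContinuous q fun x => by
      have h := hK (WithLp.ofLp x)
      rw [hilbertNorm_eq_norm_toLp, hilbertNorm_eq_norm_toLp] at h
      exact h
  have hL : ‖-L‖ < 1 := by
    rw [norm_neg]
    exact (LinearMap.mkContinuous_norm_le _ hq₀ _).trans_lt hq
  have hunit : IsUnit (1 + L) := by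
    simpa using isUnit_one_sub_of_norm_lt_one hL
  have hbij : Function.Bijective ⇑(1 + L) := by
    rwa [ContinuousLinearMap.isUnit_iff_bijective] at hunit
  exact (e.bijective.comp hbij).comp e.symm.bijective

/-- Stability of bijectivity under a perturbation `P` of a bijection `S : D → H` such that `P S⁻¹`
has norm at most `q < 1`. -/
lemma bijective_add_of_relative_bound (D : Submodule ℂ (H₀ × H₁))
    (S P : H₀ × H₁ →ₗ[ℂ] H₀ × H₁)
    (hS : Function.Bijective fun x : D => S (x : H₀ × H₁)) (q : ℝ) (hq₀ : 0 ≤ q) (hq : q < 1)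
    (hP : ∀ x ∈ D, hilbertNorm (P x) ≤ q * hilbertNorm (S x)) :
    Function.Bijective fun x : D => S (x : H₀ × H₁) + P (x : H₀ × H₁) := by
  let e : D ≃ₗ[ℂ] H₀ × H₁ := LinearEquiv.ofBijective (S ∘ₗ D.subtype) hS
  let K : H₀ × H₁ →ₗ[ℂ] H₀ × H₁ := P ∘ₗ D.subtype ∘ₗ e.symm.toLinearMap
  have hK : ∀ x, hilbertNorm (K x) ≤ q * hilbertNorm x := fun x => by
    have h := hP (e.symm x) (e.symm x).2
    have hx : S (e.symm x : H₀ × H₁) = x := e.apply_symm_apply x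
    rwa [hx] at h
  have hcomp : (fun x : D => S (x : H₀ × H₁) + P (x : H₀ × H₁)) =
      (fun y => y + K y) ∘ e := by
    funext x
    change _ = S (x : H₀ × H₁) + P (e.symm (e x) : H₀ × H₁)
    rw [e.symm_apply_apply]
  rw [hcomp]
  exact (bijective_add_of_hilbertNorm_le K q hq₀ hq hK).comp e.bijective

/-- Lemma; common point of the resolvent sets via a Neumann series.
Assume `Dom(A₀) ⊆ Dom(W₀)`, `Dom(A₁) ⊆ Dom(W₁)`, so that `B = A + V` has domain
`Dom(A) = Dom(A₀) ⊕ Dom(A₁)`.  Let `lam` be such that `A − lam : Dom(A) → H` is bijective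
with (everywhere defined) inverse `R = (A − lam)⁻¹ : H → H`, and suppose there are constants
`c ≥ 0` and `ny` bounding the operator `Y` (`‖Yx‖ ≤ ny‖x‖`, so that one may take
`ny = ‖Y‖`) with `max 1 ny * c < 1` and `‖V((A − lam)⁻¹ x)‖ ≤ c‖x‖` for all `x ∈ H`.
Then both `A + V − lam : Dom(A) → H` and `A − YV − lam : Dom(A) → H` are bijective, i.e.
`lam` is a common point of the resolvent sets of `A + V` and `A − YV`. -/
theorem common_resolvent_point_of_neumann
    (A₀ : H₀ →ₗ[ℂ] H₀) (DA₀ : Submodule ℂ H₀) (A₁ : H₁ →ₗ[ℂ] H₁) (DA₁ : Submodule ℂ H₁)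
    (W₀ : H₀ →ₗ[ℂ] H₁) (DW₀ : Submodule ℂ H₀) (W₁ : H₁ →ₗ[ℂ] H₀) (DW₁ : Submodule ℂ H₁)
    (X₀ : H₀ →L[ℂ] H₁) (X₁ : H₁ →L[ℂ] H₀)
    (hAW₀ : DA₀ ≤ DW₀) (hAW₁ : DA₁ ≤ DW₁)
    (lam : ℂ)
    (hbijA : Function.Bijective fun x : DA₀.prod DA₁ =>
      diagOp A₀ A₁ (x : H₀ × H₁) - lam • (x : H₀ × H₁))
    (R : H₀ × H₁ → H₀ × H₁)
    (hR : ∀ y : H₀ × H₁, R y ∈ DA₀.prod DA₁ ∧ diagOp A₀ A₁ (R y) - lam • R y = y)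
    (c ny : ℝ) (hc : 0 ≤ c)
    (hny : ∀ x : H₀ × H₁, hilbertNorm (Yop X₀ X₁ x) ≤ ny * hilbertNorm x)
    (hsmall : max 1 ny * c < 1)
    (hVR : ∀ x : H₀ × H₁, hilbertNorm (offDiagOp W₀ W₁ (R x)) ≤ c * hilbertNorm x) :
    (Function.Bijective fun x : DA₀.prod DA₁ =>
        blockOp A₀ A₁ W₀ W₁ (x : H₀ × H₁) - lam • (x : H₀ × H₁)) ∧
      Function.Bijective fun x : DA₀.prod DA₁ =>
        AminusYV A₀ A₁ W₀ W₁ X₀ X₁ (x : H₀ × H₁) - lam • (x : H₀ × H₁) := by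
  have hVA : ∀ x ∈ DA₀.prod DA₁, hilbertNorm (offDiagOp W₀ W₁ x) ≤
      c * hilbertNorm (diagOp A₀ A₁ x - lam • x) := fun x hx => by
    -- injectivity of `A - lam` makes the right inverse `R` also a left inverse on `Dom(A)`
    have hRx : R (diagOp A₀ A₁ x - lam • x) = x :=
      congrArg Subtype.val (hbijA.injective
        (a₁ := ⟨R (diagOp A₀ A₁ x - lam • x), (hR _).1⟩) (a₂ := ⟨x, hx⟩) (hR _).2)
    simpa only [hRx] using hVR (diagOp A₀ A₁ x - lam • x)
  have hmax : (0 : ℝ) ≤ max 1 ny := zero_le_one.trans (le_max_left _ _)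
  have key := fun P => bijective_add_of_relative_bound (DA₀.prod DA₁)
    (diagOp A₀ A₁ - lam • LinearMap.id) P hbijA (max 1 ny * c) (mul_nonneg hmax hc) hsmall
  constructor
  · convert key (offDiagOp W₀ W₁) fun x hx => ?_ using 2 with x
    · ext <;> simp [blockOp, diagOp, offDiagOp] <;> abel
    · refine (hVA x hx).trans (mul_le_mul_of_nonneg_right ?_ (hilbertNorm_nonneg _))
      exact le_mul_of_one_le_left hc (le_max_left _ _)
  · convert key (-(Yop X₀ X₁ ∘ₗ offDiagOp W₀ W₁)) fun x hx => ?_ using 2 with x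
    · ext <;> simp [AminusYV, diagOp, offDiagOp, Yop] <;> abel
    · rw [LinearMap.neg_apply, hilbertNorm_neg, mul_assoc]
      calc hilbertNorm (Yop X₀ X₁ (offDiagOp W₀ W₁ x))
          ≤ ny * hilbertNorm (offDiagOp W₀ W₁ x) := hny _
        _ ≤ max 1 ny * hilbertNorm (offDiagOp W₀ W₁ x) :=
            mul_le_mul_of_nonneg_right (le_max_right _ _) (hilbertNorm_nonneg _)
        _ ≤ _ := mul_le_mul_of_nonneg_left (hVA x hx) hmax
end
end
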